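/- Let G~ be a mixed graph with connected components G~₁, …, G~_t. Then r(G~) = 2m(G) − 2κ(G) + 1 if and only if exactly one connected component G~₀ (with underlying graph G₀) satisfies r(G~₀) = 2m(G₀) − 2κ(G₀) + 1 while every other connected component G~_i satisfies r(G~_i) = 2m(G_i) − 2κ(G_i). -/

import Mathlib

open scoped Classical

namespace MixedPaper

universe u

/-- A mixed graph: a finite simple graph together with an orientation of a subset
of its edges.  `arc u v = true` means there is an arc from `u` to `v`. -/
structure MixedGraph (V : Type u) where
  graph : SimpleGraph V
  arc : V → V → Bool
  arc_adj : ∀ u v, arc u v → graph.Adj u v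
  arc_antisymm : ∀ u v, arc u v → ¬ arc v u

variable {V : Type u}

/-- The Hermitian adjacency matrix of a mixed graph. -/
noncomputable def MixedGraph.hMatrix [Fintype V] [DecidableEq V] (M : MixedGraph V) :
    Matrix V V ℂ := fun u v =>
  if M.arc u v then Complex.I
  else if M.arc v u then -Complex.I
  else if M.graph.Adj u v then 1 else 0

/-- The H-rank of a mixed graph: the rank of its Hermitian adjacency matrix. -/
noncomputable def MixedGraph.hRank [Fintype V] [DecidableEq V] (M : MixedGraph V) : ℕ :=
  M.hMatrix.rank

/-- The matching number of a simple graph. -/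
noncomputable def matchingNumber (G : SimpleGraph V) : ℕ :=
  sSup {k | ∃ N : G.Subgraph, N.IsMatching ∧ N.edgeSet.ncard = k}

/-- A subgraph is a cycle subgraph if it is connected and every one of its vertices
has exactly two neighbours in it. -/
def IsCycleSubgraph {G : SimpleGraph V} (C : G.Subgraph) : Prop :=
  C.Connected ∧ ∀ v ∈ C.verts, {w | C.Adj v w}.ncard = 2

/-- κ(G) : the number of even cycles of G. -/
noncomputable def evenCycleCount (G : SimpleGraph V) : ℕ :=
  {C : G.Subgraph | IsCycleSubgraph C ∧ Even C.verts.ncard}.ncard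

/-- c(G) = |E(G)| - |V(G)| + ω(G), the cyclomatic number. -/
noncomputable def cyclomatic [Fintype V] (G : SimpleGraph V) : ℤ :=
  (G.edgeSet.ncard : ℤ) - (Fintype.card V : ℤ) + (Nat.card G.ConnectedComponent : ℤ)

/-- The induced mixed subgraph on a set of vertices. -/
def MixedGraph.induce (M : MixedGraph V) (S : Set V) : MixedGraph S where
  graph := M.graph.induce S
  arc := fun a b => M.arc a.1 b.1
  arc_adj := fun a b h => M.arc_adj a.1 b.1 h
  arc_antisymm := fun a b h => M.arc_antisymm a.1 b.1 h

/-- The mixed subgraph induced by a connected component of the underlying graph. -/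
def MixedGraph.comp (M : MixedGraph V) (c : M.graph.ConnectedComponent) :
    MixedGraph c.supp := M.induce c.supp

/-- The signature |f - b| of a closed walk in a mixed graph: the absolute difference
between the numbers of forward and backward arcs along the walk. -/
def walkSignature (M : MixedGraph V) {u : V} (w : M.graph.Walk u u) : ℕ :=
  ((w.darts.countP fun d => M.arc d.toProd.1 d.toProd.2 : ℤ) -
    (w.darts.countP fun d => M.arc d.toProd.2 d.toProd.1 : ℤ)).natAbs

/-- The signature of the cycle subgraph `C` of the mixed graph `M` satisfies the
predicate `P` (expressed via a closed walk traversing `C`; the signature does not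
depend on the choice of traversal). -/
def CycleSig (M : MixedGraph V) (C : M.graph.Subgraph) (P : ℕ → Prop) : Prop :=
  ∃ (u : V) (w : M.graph.Walk u u), w.IsCycle ∧
    {v | v ∈ w.support} = C.verts ∧ {e | e ∈ w.edges} = C.edgeSet ∧
    P (walkSignature M w)

/-- `C` is a pendant cycle with unique vertex `x` of degree 3. -/
def IsPendantCycle (G : SimpleGraph V) (C : G.Subgraph) (x : V) : Prop :=
  IsCycleSubgraph C ∧ x ∈ C.verts ∧ {w | G.Adj x w}.ncard = 3 ∧
    ∀ v ∈ C.verts, v ≠ x → {w | G.Adj v w}.ncard = 2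

/-- G has no pendant vertices (vertices of degree 1). -/
def NoPendantVerts (G : SimpleGraph V) : Prop := ∀ u : V, {w | G.Adj u w}.ncard ≠ 1

/-- The (distinct) cycles of G are pairwise vertex-disjoint. -/
def CyclesVertexDisjoint (G : SimpleGraph V) : Prop :=
  ∀ C₁ C₂ : G.Subgraph, IsCycleSubgraph C₁ → IsCycleSubgraph C₂ → C₁ ≠ C₂ →
    Disjoint C₁.verts C₂.verts

/-- The (distinct) even cycles of G are pairwise vertex-disjoint. -/
def EvenCyclesVertexDisjoint (G : SimpleGraph V) : Prop :=
  ∀ C₁ C₂ : G.Subgraph, IsCycleSubgraph C₁ → IsCycleSubgraph C₂ →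
    Even C₁.verts.ncard → Even C₂.verts.ncard → C₁ ≠ C₂ →
    Disjoint C₁.verts C₂.verts

/-- One pendant `K₂` deletion step, recorded on the surviving vertex sets:
`u` is pendant in the graph induced on `S` with unique neighbour `v` there,
and both are deleted. -/
def PendantStep (G : SimpleGraph V) (S T : Set V) : Prop :=
  ∃ u v, u ∈ S ∧ v ∈ S ∧ {w | w ∈ S ∧ G.Adj u w} = {v} ∧ T = S \ {u, v}

/-- `S` is reachable from the full vertex set by a sequence of pendant K₂ deletions. -/
def PendantReaches (G : SimpleGraph V) (S : Set V) : Prop :=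
  Relation.ReflTransGen (PendantStep G) Set.univ S

/-- The graph induced on `S` has no pendant vertices. -/
def NoPendantIn (G : SimpleGraph V) (S : Set V) : Prop :=
  ∀ u ∈ S, {w | w ∈ S ∧ G.Adj u w}.ncard ≠ 1

/-- `u` lies on some even cycle of `G`. -/
def OnEvenCycle (G : SimpleGraph V) (u : V) : Prop :=
  ∃ C : G.Subgraph, IsCycleSubgraph C ∧ Even C.verts.ncard ∧ u ∈ C.verts

/-- G is the graph ∞(p,1,q): two cycles of lengths p and q sharing exactly one vertex. -/
def IsInfinityGraph (G : SimpleGraph V) (p q : ℕ) : Prop :=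
  ∃ C₁ C₂ : G.Subgraph, IsCycleSubgraph C₁ ∧ IsCycleSubgraph C₂ ∧
    C₁.verts.ncard = p ∧ C₂.verts.ncard = q ∧
    (C₁.verts ∩ C₂.verts).ncard = 1 ∧ C₁ ⊔ C₂ = ⊤

/-- G is the theta graph θ(p,l,q): three internally disjoint paths with p, l, q
vertices respectively, joining two common endvertices. -/
def IsThetaGraph (G : SimpleGraph V) (p l q : ℕ) : Prop :=
  2 ≤ p ∧ 2 ≤ l ∧ 2 ≤ q ∧ ¬(p = 2 ∧ l = 2) ∧ ¬(p = 2 ∧ q = 2) ∧ ¬(l = 2 ∧ q = 2) ∧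
  ∃ (a b : V) (W₁ W₂ W₃ : G.Walk a b), W₁.IsPath ∧ W₂.IsPath ∧ W₃.IsPath ∧
    W₁.length = p - 1 ∧ W₂.length = l - 1 ∧ W₃.length = q - 1 ∧
    (∀ v : V, v ∈ W₁.support ∨ v ∈ W₂.support ∨ v ∈ W₃.support) ∧
    (∀ e ∈ G.edgeSet, e ∈ W₁.edges ∨ e ∈ W₂.edges ∨ e ∈ W₃.edges) ∧
    {v | v ∈ W₁.support ∧ v ∈ W₂.support} = {a, b} ∧
    {v | v ∈ W₁.support ∧ v ∈ W₃.support} = {a, b} ∧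
    {v | v ∈ W₂.support ∧ v ∈ W₃.support} = {a, b}

/-- Every odd cycle of `M` has signature satisfying `P`. -/
def OddCyclesSig (M : MixedGraph V) (P : ℕ → Prop) : Prop :=
  ∀ C : M.graph.Subgraph, IsCycleSubgraph C → Odd C.verts.ncard → CycleSig M C P

/-- Every even cycle of `M`, of length `n`, has signature `s` satisfying `P n s`. -/
def EvenCyclesSig (M : MixedGraph V) (P : ℕ → ℕ → Prop) : Prop :=
  ∀ C : M.graph.Subgraph, IsCycleSubgraph C → Even C.verts.ncard →
    CycleSig M C (P C.verts.ncard)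

/-- The whole mixed graph is a single cycle. -/
def IsCycleMG (M : MixedGraph V) : Prop := IsCycleSubgraph (⊤ : M.graph.Subgraph)

/-- The family 𝔊₀. -/
def MemG0 [Fintype V] [DecidableEq V] (M : MixedGraph V) : Prop :=
  M.graph.Connected ∧ 1 ≤ cyclomatic M.graph ∧ CyclesVertexDisjoint M.graph ∧
  NoPendantVerts M.graph ∧
  ∃ (C : M.graph.Subgraph) (x : V), IsPendantCycle M.graph C x ∧ Odd C.verts.ncard ∧
    CycleSig M C Odd ∧
    ((M.induce (C.vertsᶜ ∪ {x})).hRank : ℤ) =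
      2 * (matchingNumber (M.induce (C.vertsᶜ ∪ {x})).graph : ℤ) -
        2 * cyclomatic (M.induce (C.vertsᶜ ∪ {x})).graph

/-- The family 𝔛₁ : mixed ∞(p,1,q)-graphs, p even, q odd, whose odd cycle has odd
signature and whose even cycle C̃_p satisfies σ ≡ p (mod 4). -/
def MemX1 (M : MixedGraph V) : Prop :=
  ∃ p q : ℕ, Even p ∧ Odd q ∧ IsInfinityGraph M.graph p q ∧
    OddCyclesSig M Odd ∧ EvenCyclesSig M (fun n s => s % 4 = n % 4)

/-- The family 𝔛₂ : mixed θ(p,l,q)-graphs, p even, l q odd, whose two odd cycles have odd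
signatures and whose even cycle C̃_{q+l-2} satisfies q + l + σ ≡ 2 (mod 4). -/
def MemX2 (M : MixedGraph V) : Prop :=
  ∃ p l q : ℕ, Even p ∧ Odd l ∧ Odd q ∧ IsThetaGraph M.graph p l q ∧
    OddCyclesSig M Odd ∧ EvenCyclesSig M (fun _ s => (q + l + s) % 4 = 2)

/-- The family 𝔊₂ = 𝔊₀ ∪ 𝔛₁ ∪ 𝔛₂ together with the mixed odd cycles of odd signature. -/
def MemG2 [Fintype V] [DecidableEq V] (M : MixedGraph V) : Prop :=
  MemG0 M ∨ MemX1 M ∨ MemX2 M ∨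
    (IsCycleMG M ∧ Odd (Nat.card V) ∧ CycleSig M ⊤ Odd)

/-- The family 𝔜₁. -/
def MemY1 (M : MixedGraph V) : Prop :=
  ∃ p q : ℕ, Even p ∧ Odd q ∧ IsInfinityGraph M.graph p q ∧
    OddCyclesSig M Even ∧ EvenCyclesSig M (fun n s => s % 4 = n % 4)

/-- The family 𝔜₂. -/
def MemY2 (M : MixedGraph V) : Prop :=
  ∃ p l q : ℕ, Even p ∧ Odd l ∧ Odd q ∧ IsThetaGraph M.graph p l q ∧
    OddCyclesSig M Even ∧ EvenCyclesSig M (fun _ s => (q + l + s) % 4 = 2)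

/-- `M` is a disjoint union of `k` even cycles and one odd cycle with even signature. -/
def IsDisjointUnionEvenCyclesOddCycleEvenSig (M : MixedGraph V) (k : ℤ) : Prop :=
  (∀ c : M.graph.ConnectedComponent, IsCycleMG (M.comp c)) ∧
  (({c : M.graph.ConnectedComponent | Even (Nat.card c.supp)}.ncard : ℤ) = k) ∧
  (∃! c : M.graph.ConnectedComponent, Odd (Nat.card c.supp)) ∧
  (∀ c : M.graph.ConnectedComponent, Odd (Nat.card c.supp) →
    CycleSig (M.comp c) ⊤ Even)

/-- The family 𝔉₀. -/
def MemF0 [Fintype V] [DecidableEq V] (M : MixedGraph V) : Prop :=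
  M.graph.Connected ∧ 2 ≤ cyclomatic M.graph ∧ CyclesVertexDisjoint M.graph ∧
  NoPendantVerts M.graph ∧
  (∃ (C₀ : M.graph.Subgraph) (x₀ : V), IsPendantCycle M.graph C₀ x₀ ∧ Odd C₀.verts.ncard ∧
    CycleSig M C₀ Even ∧
    ∀ C : M.graph.Subgraph, IsCycleSubgraph C → C ≠ C₀ →
      Even C.verts.ncard ∧ CycleSig M C (fun s => s % 4 = C.verts.ncard % 4)) ∧
  (∃ (Cq : M.graph.Subgraph) (x : V), IsPendantCycle M.graph Cq x ∧ Even Cq.verts.ncard ∧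
    ∃ S : Set ↥(Cq.vertsᶜ ∪ {x}),
      PendantReaches (M.induce (Cq.vertsᶜ ∪ {x})).graph S ∧
      NoPendantIn (M.induce (Cq.vertsᶜ ∪ {x})).graph S ∧
      IsDisjointUnionEvenCyclesOddCycleEvenSig
        ((M.induce (Cq.vertsᶜ ∪ {x})).induce S)
        (cyclomatic (M.induce (Cq.vertsᶜ ∪ {x})).graph))

/-- The family 𝔉₂ = 𝔉₀ ∪ 𝔜₁ ∪ 𝔜₂ together with the mixed odd cycles of even signature. -/
def MemF2 [Fintype V] [DecidableEq V] (M : MixedGraph V) : Prop :=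
  MemF0 M ∨ MemY1 M ∨ MemY2 M ∨
    (IsCycleMG M ∧ Odd (Nat.card V) ∧ CycleSig M ⊤ Even)

/-- A connected component that is either an even cycle C̃_q with σ ≡ q (mod 4),
or an isolated vertex. -/
def GoodOtherComp (M : MixedGraph V) : Prop :=
  (IsCycleMG M ∧ Even (Nat.card V) ∧
    CycleSig M ⊤ (fun s => s % 4 = (Nat.card V) % 4)) ∨
  Nat.card V = 1

/-- A fractional matching of `G`, given as a weight function on `Sym2 V` vanishing
outside the edge set. -/
def IsFracMatching [Fintype V] [DecidableEq V] (G : SimpleGraph V) (f : Sym2 V → ℝ) : Prop :=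
  (∀ e ∈ G.edgeSet, 0 ≤ f e ∧ f e ≤ 1) ∧ (∀ e, e ∉ G.edgeSet → f e = 0) ∧
    ∀ v : V, ∑ e ∈ Finset.univ.filter (fun e : Sym2 V => v ∈ e), f e ≤ 1

/-- The fractional matching number m*(G). -/
noncomputable def fracMatchingNumber [Fintype V] [DecidableEq V] (G : SimpleGraph V) : ℝ :=
  sSup {x : ℝ | ∃ f : Sym2 V → ℝ, IsFracMatching G f ∧ ∑ e : Sym2 V, f e = x}

/-- Membership in the family ℱ : fractional matchings of total weight m*(G) taking
values in {0, 1/2, 1}. -/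
def InOptFamily [Fintype V] [DecidableEq V] (G : SimpleGraph V) (f : Sym2 V → ℝ) : Prop :=
  IsFracMatching G f ∧ (∑ e : Sym2 V, f e) = fracMatchingNumber G ∧
    ∀ e : Sym2 V, f e = 0 ∨ f e = 1 / 2 ∨ f e = 1

/-- An optimal fractional matching: a member of ℱ with the largest number of
edges of weight 1. -/
def IsOptFracMatching [Fintype V] [DecidableEq V] (G : SimpleGraph V) (f : Sym2 V → ℝ) : Prop :=
  InOptFamily G f ∧
    ∀ g : Sym2 V → ℝ, InOptFamily G g →
      {e : Sym2 V | g e = 1}.ncard ≤ {e : Sym2 V | f e = 1}.ncard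

/-- E₁(C) : the edges of `G` with exactly one endpoint on the cycle `C`. -/
def cutEdges (G : SimpleGraph V) (C : G.Subgraph) : Set (Sym2 V) :=
  {e | e ∈ G.edgeSet ∧ ∃ a b : V, e = s(a, b) ∧ a ∈ C.verts ∧ b ∉ C.verts}


/-! ### Matchings as involutions -/

/-- `f` encodes a matching: an involution moving points only along edges. -/
def MI (G : SimpleGraph V) (f : V → V) : Prop :=
  (∀ v, f (f v) = v) ∧ ∀ v, f v ≠ v → G.Adj v (f v)

/-- `C` is an even cycle. -/
def EvCyc {G : SimpleGraph V} (C : G.Subgraph) : Prop :=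
  IsCycleSubgraph C ∧ Even C.verts.ncard

theorem verts_eq_two_mul [Fintype V] {G : SimpleGraph V} {N : G.Subgraph} (h : N.IsMatching) :
    N.verts.ncard = 2 * N.edgeSet.ncard := by
  have h1 := N.spanningCoe.sum_degrees_eq_twice_card_edges
  have h2 : ∀ v, N.spanningCoe.degree v = if v ∈ N.verts then 1 else 0 := by
    intro v
    rw [← SimpleGraph.card_neighborSet_eq_degree, Fintype.card_eq_nat_card, Nat.card_coe_set_eq]
    split_ifs with hv
    · obtain ⟨w, hw, hw'⟩ := h hv
      rw [Set.ncard_eq_one]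
      refine ⟨w, ?_⟩
      ext y
      simp only [SimpleGraph.mem_neighborSet, SimpleGraph.Subgraph.spanningCoe_adj,
        Set.mem_singleton_iff]
      exact ⟨fun hy => hw' y hy, fun hy => hy ▸ hw⟩
    · rw [Set.ncard_eq_zero]
      ext y
      simp only [SimpleGraph.mem_neighborSet, SimpleGraph.Subgraph.spanningCoe_adj,
        Set.mem_empty_iff_false, iff_false]
      exact fun hy => hv (N.edge_vert hy)
  have h3 : N.edgeSet.ncard = N.spanningCoe.edgeFinset.card := by
    rw [← Set.ncard_coe_finset, SimpleGraph.coe_edgeFinset,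
      SimpleGraph.Subgraph.edgeSet_spanningCoe]
  rw [h3, ← h1]
  simp only [h2]
  rw [Finset.sum_boole, Set.ncard_eq_toFinset_card']
  simp

theorem MI.realize [Fintype V] {G : SimpleGraph V} {f : V → V} (hf : MI G f) :
    ∃ N : G.Subgraph, N.IsMatching ∧ N.verts = {v | f v ≠ v} := by
  refine ⟨{ verts := {v | f v ≠ v}
            Adj := fun a b => f a ≠ a ∧ b = f a
            adj_sub := ?_
            edge_vert := ?_
            symm := ?_ }, ?_, rfl⟩
  · rintro a b ⟨h, rfl⟩
    exact hf.2 a h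
  · rintro a b ⟨h, rfl⟩
    exact h
  · constructor
    rintro a b ⟨h, rfl⟩
    refine ⟨?_, (hf.1 a).symm⟩
    rw [hf.1 a]; exact h.symm
  · intro v hv
    exact ⟨f v, ⟨hv, rfl⟩, fun y hy => hy.2⟩

theorem match_bdd [Fintype V] (G : SimpleGraph V) :
    BddAbove {k | ∃ N : G.Subgraph, N.IsMatching ∧ N.edgeSet.ncard = k} := by
  refine ⟨Nat.card (Sym2 V), ?_⟩
  rintro k ⟨N, -, rfl⟩
  exact Set.ncard_le_card _

theorem MI.le [Fintype V] {G : SimpleGraph V} {f : V → V} (hf : MI G f) :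
    {v | f v ≠ v}.ncard ≤ 2 * matchingNumber G := by
  obtain ⟨N, hN, hv⟩ := hf.realize
  rw [← hv, verts_eq_two_mul hN]
  exact Nat.mul_le_mul_left 2 (le_csSup (match_bdd G) ⟨N, hN, rfl⟩)

theorem exists_MI [Fintype V] (G : SimpleGraph V) :
    ∃ f, MI G f ∧ {v | f v ≠ v}.ncard = 2 * matchingNumber G := by
  have hne : {k | ∃ N : G.Subgraph, N.IsMatching ∧ N.edgeSet.ncard = k}.Nonempty :=
    ⟨_, ⊥, by intro v hv; exact absurd hv (by simp), rfl⟩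
  obtain ⟨N, hN, hk⟩ := Nat.sSup_mem hne (match_bdd G)
  choose g hg hg' using fun v (hv : v ∈ N.verts) => hN hv
  let f : V → V := fun v => if hv : v ∈ N.verts then g v hv else v
  have hf1 : ∀ v (hv : v ∈ N.verts), f v = g v hv := fun v hv => by simp [f, hv]
  have hf2 : ∀ v, v ∉ N.verts → f v = v := fun v hv => by simp [f, hv]
  have hs : {v | f v ≠ v} = N.verts := by
    ext v
    simp only [Set.mem_ofPred_eq]
    constructor
    · intro h
      by_contra hv
      exact h (hf2 v hv)
    · intro hv
      rw [hf1 v hv]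
      exact (N.adj_sub (hg v hv)).ne'
  refine ⟨f, ⟨?_, ?_⟩, ?_⟩
  · intro v
    by_cases hv : v ∈ N.verts
    · rw [hf1 v hv, hf1 _ (N.edge_vert (hg v hv).symm)]
      exact (hg' _ _ v (hg v hv).symm).symm
    · rw [hf2 v hv, hf2 v hv]
  · intro v hv
    have hv' : v ∈ N.verts := hs ▸ hv
    rw [hf1 v hv']
    exact N.adj_sub (hg v hv')
  · rw [hs, verts_eq_two_mul hN, hk]; rfl

/-! ### Two different perfect matchings give an even cycle -/

theorem exists_even_cycle [Fintype V] {G : SimpleGraph V} {f g : V → V}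
    (hf : ∀ v, f (f v) = v) (hg : ∀ v, g (g v) = v)
    (hfG : ∀ v, G.Adj v (f v)) (hgG : ∀ v, G.Adj v (g v)) (v : V) (hv : f v ≠ g v) :
    ∃ C : G.Subgraph, EvCyc C := by
  let R : V → V → Prop := fun a b => b = f a ∨ b = g a
  let O : Set V := {x | Relation.ReflTransGen R v x}
  have hOf : ∀ x ∈ O, f x ∈ O := fun x hx => Relation.ReflTransGen.tail hx (Or.inl rfl)
  have hOg : ∀ x ∈ O, g x ∈ O := fun x hx => Relation.ReflTransGen.tail hx (Or.inr rfl)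
  have hne : ∀ x ∈ O, f x ≠ g x := by
    intro x hx
    induction hx with
    | refl => exact hv
    | tail h1 h2 ih =>
      rename_i b c
      rcases h2 with rfl | rfl
      · rw [hf]
        intro h
        apply ih
        have := congrArg g h
        rw [hg] at this
        exact this.symm
      · rw [hg]
        intro h
        apply ih
        have := congrArg f h
        rw [hf] at this
        exact this.symm
  let C : G.Subgraph :=
    { verts := O
      Adj := fun a b => a ∈ O ∧ (b = f a ∨ b = g a)
      adj_sub := by
        rintro a b ⟨-, rfl | rfl⟩
        · exact hfG a
        · exact hgG a
      edge_vert := fun h => h.1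
      symm := by
        constructor
        rintro a b ⟨h, rfl | rfl⟩
        · exact ⟨hOf a h, Or.inl (hf a).symm⟩
        · exact ⟨hOg a h, Or.inr (hg a).symm⟩ }
  refine ⟨C, ⟨?_, ?_⟩, ?_⟩
  · constructor
    rw [SimpleGraph.connected_iff_exists_forall_reachable]
    refine ⟨⟨v, Relation.ReflTransGen.refl⟩, ?_⟩
    rintro ⟨w, hw⟩
    change Relation.ReflTransGen R v w at hw
    induction hw with
    | refl => exact SimpleGraph.Reachable.refl _
    | tail h1 h2 ih =>
      refine SimpleGraph.Reachable.trans (ih) (SimpleGraph.Adj.reachable ?_)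
      exact ⟨h1, h2⟩
  · intro x hx
    rw [Set.ncard_eq_two]
    refine ⟨f x, g x, hne x hx, ?_⟩
    ext y
    simp only [Set.mem_ofPred_eq, Set.mem_insert_iff, Set.mem_singleton_iff]
    exact ⟨fun h => h.2, fun h => ⟨hx, h⟩⟩
  · change Even O.ncard
    have h0 : ∑ x ∈ O.toFinset, (1 : ZMod 2) = 0 := by
      refine Finset.sum_involution (fun a _ => f a) ?_ ?_ ?_ ?_
      · intro a _; decide
      · intro a _ _; exact (hfG a).ne'
      · intro a ha
        simp only [Set.mem_toFinset] at ha ⊢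
        exact hOf a ha
      · intro a _; exact hf a
    rw [Set.ncard_eq_toFinset_card']
    rw [Finset.sum_const, nsmul_eq_mul, mul_one, ZMod.natCast_eq_zero_iff] at h0
    exact even_iff_two_dvd.mpr h0

/-! ### Determinant modulo 2 -/

theorem det_adj_mod_two [Fintype V] [DecidableEq V] {G : SimpleGraph V} {f : V → V}
    (hf : ∀ v, f (f v) = v) (hfG : ∀ v, G.Adj v (f v)) (hG : ∀ C : G.Subgraph, ¬ EvCyc C)
    (A : Matrix V V (ZMod 2)) (hA : ∀ u v, A u v = if G.Adj u v then 1 else 0) :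
    A.det = 1 := by
  let φ : Equiv.Perm V := ⟨f, f, hf, hf⟩
  have hsymm : ∀ u v, A u v = A v u := fun u v => by simp only [hA, G.adj_comm]
  have hsign : ∀ σ : Equiv.Perm V, ∀ x : ZMod 2, Equiv.Perm.sign σ • x = x := by
    intro σ x
    rcases Int.units_eq_one_or (Equiv.Perm.sign σ) with h | h
    · rw [h, one_smul]
    · rw [h]
      revert x
      decide
  have hprod : ∀ σ : Equiv.Perm V, ∏ i, A (σ⁻¹ i) i = ∏ i, A (σ i) i := by
    intro σ
    rw [← Equiv.prod_comp σ]
    refine Finset.prod_congr rfl fun i _ => ?_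
    rw [hsymm]
    simp
  rw [Matrix.det_apply]
  simp only [hsign]
  rw [← Finset.add_sum_erase _ _ (Finset.mem_univ φ)]
  rw [Finset.sum_involution (fun σ _ => σ⁻¹)]
  · rw [add_zero]
    refine Finset.prod_eq_one fun i _ => ?_
    rw [hA, if_pos]
    exact (hfG i).symm
  · intro σ _
    rw [hprod]
    exact CharTwo.add_self_eq_zero _
  · intro σ hσ hne hinv
    apply (Finset.mem_erase.mp hσ).1
    have hadj : ∀ i, G.Adj i (σ i) := by
      intro i
      by_contra h
      apply hne
      refine Finset.prod_eq_zero (Finset.mem_univ i) ?_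
      rw [hA, if_neg]
      exact fun h' => h h'.symm
    have hσσ : ∀ i, σ (σ i) = i := by
      intro i
      have h := congrArg (fun τ : Equiv.Perm V => τ (σ i)) hinv
      simpa using h.symm
    by_contra hc
    obtain ⟨v, hv⟩ : ∃ v, f v ≠ σ v := by
      by_contra h
      push Not at h
      exact hc (Equiv.ext fun v => (h v).symm)
    obtain ⟨C, hC⟩ := exists_even_cycle hf hσσ hfG hadj v hv
    exact hG C hC
  · intro σ hσ
    rw [Finset.mem_erase] at hσ ⊢
    refine ⟨fun h => hσ.1 ?_, Finset.mem_univ _⟩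
    rw [← inv_inv σ, h]
    rfl
  · intro σ _
    exact inv_inv σ

theorem det_ne_zero [Fintype V] [DecidableEq V] (M : MixedGraph V) {f : V → V}
    (hf : ∀ v, f (f v) = v) (hfG : ∀ v, M.graph.Adj v (f v))
    (hG : ∀ C : M.graph.Subgraph, ¬ EvCyc C) : M.hMatrix.det ≠ 0 := by
  let B : Matrix V V GaussianInt := fun u v =>
    if M.arc u v then ⟨0, 1⟩ else if M.arc v u then ⟨0, -1⟩
    else if M.graph.Adj u v then 1 else 0
  have hB : ∀ u v, B u v = if M.arc u v then ⟨0, 1⟩ else if M.arc v u then ⟨0, -1⟩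
    else if M.graph.Adj u v then 1 else 0 := fun _ _ => rfl
  clear_value B
  have h1 : M.hMatrix = GaussianInt.toComplex.mapMatrix B := by
    ext u v
    rw [RingHom.mapMatrix_apply, Matrix.map_apply, hB]
    simp only [MixedGraph.hMatrix]
    split_ifs <;> simp [GaussianInt.toComplex_def']
  let ψ : GaussianInt →+* ZMod 2 := Zsqrtd.lift ⟨1, by decide⟩
  have h2 : (ψ.mapMatrix B).det = 1 := by
    refine det_adj_mod_two hf hfG hG _ ?_
    intro u v
    rw [RingHom.mapMatrix_apply, Matrix.map_apply, hB]
    split_ifs with a b c d e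
    · simp [ψ]
    · exact absurd (M.arc_adj _ _ a) b
    · simp [ψ]
    · exact absurd (M.arc_adj _ _ c).symm d
    · simp
    · simp
  rw [h1, ← RingHom.map_det]
  intro h
  rw [GaussianInt.toComplex_eq_zero] at h
  rw [← RingHom.map_det, h, map_zero] at h2
  exact zero_ne_one h2

/-! ### Even cycles and embeddings -/

theorem evCyc_map {W : Type u} [Fintype V] [Fintype W] {G : SimpleGraph V} {H : SimpleGraph W}
    (φ : G.Copy H) (C : G.Subgraph) : EvCyc (C.map φ.toHom) ↔ EvCyc C := by
  have hinj : Function.Injective φ.toHom := φ.injective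
  have hv : (C.map φ.toHom).verts.ncard = C.verts.ncard := by
    rw [SimpleGraph.Subgraph.map_verts, Set.ncard_image_of_injective _ hinj]
  have hn : ∀ v, {w | (C.map φ.toHom).Adj (φ.toHom v) w}.ncard = {w | C.Adj v w}.ncard := by
    intro v
    rw [← Set.ncard_image_of_injective {w | C.Adj v w} hinj]
    congr 1
    ext w
    simp only [SimpleGraph.Subgraph.map_adj, Relation.Map, Set.mem_ofPred_eq, Set.mem_image]
    constructor
    · rintro ⟨a, b, hab, ha, rfl⟩
      rw [hinj ha] at hab
      exact ⟨b, hab, rfl⟩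
    · rintro ⟨b, hb, rfl⟩
      exact ⟨v, b, hb, rfl, rfl⟩
  unfold EvCyc IsCycleSubgraph
  rw [hv, SimpleGraph.Subgraph.connected_iff', SimpleGraph.Subgraph.connected_iff',
    ← (φ.isoSubgraphMap C).connected_iff]
  rw [SimpleGraph.Subgraph.map_verts, Set.forall_mem_image]
  simp only [hn]

/-! ### The lower bound -/

theorem lower_bound [Fintype V] [DecidableEq V] (M : MixedGraph V) :
    2 * matchingNumber M.graph ≤ M.hRank + 2 * evenCycleCount M.graph := by
  obtain ⟨f, hf, hcard⟩ := exists_MI M.graph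
  choose x hx using fun C : {C : M.graph.Subgraph // EvCyc C} => C.2.1.1.nonempty
  let X : Set V := Set.range x
  have hX : X.ncard ≤ evenCycleCount M.graph := by
    have h1 : X.ncard ≤ (Set.univ : Set {C : M.graph.Subgraph // EvCyc C}).ncard := by
      change (Set.range x).ncard ≤ _
      rw [← Set.image_univ]
      exact Set.ncard_image_le
    rw [Set.ncard_univ] at h1
    exact h1
  let S : Set V := {v | f v ≠ v ∧ v ∉ X ∧ f v ∉ X}
  have hS : {v | f v ≠ v}.ncard ≤ S.ncard + 2 * X.ncard := by
    have hsub : {v | f v ≠ v} ⊆ S ∪ (X ∪ f '' X) := by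
      intro v hv
      by_cases h1 : v ∈ X
      · exact Or.inr (Or.inl h1)
      by_cases h2 : f v ∈ X
      · exact Or.inr (Or.inr ⟨f v, h2, hf.1 v⟩)
      exact Or.inl ⟨hv, h1, h2⟩
    have h1 := Set.ncard_le_ncard hsub
    have h2 := Set.ncard_union_le S (X ∪ f '' X)
    have h3 := Set.ncard_union_le X (f '' X)
    have h4 : (f '' X).ncard ≤ X.ncard := Set.ncard_image_le
    omega
  have hSf : ∀ v ∈ S, f v ∈ S := by
    rintro v ⟨h1, h2, h3⟩
    refine ⟨?_, h3, ?_⟩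
    · rw [hf.1]; exact h1.symm
    · rw [hf.1]; exact h2
  have hdet : (M.induce S).hMatrix.det ≠ 0 := by
    refine det_ne_zero (M.induce S) (f := fun v => ⟨f v.1, hSf v.1 v.2⟩) ?_ ?_ ?_
    · intro v; exact Subtype.ext (hf.1 v.1)
    · intro v; exact hf.2 v.1 v.2.1
    · intro C hC
      let φ : (M.induce S).graph.Copy M.graph := (SimpleGraph.Embedding.induce S).toCopy
      have hC' := (evCyc_map φ C).mpr hC
      obtain ⟨y, hy, hy'⟩ := hx ⟨_, hC'⟩
      have : x ⟨_, hC'⟩ ∈ S := by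
        rw [← hy']; exact y.2
      exact this.2.1 ⟨_, rfl⟩
  have hrk : S.ncard ≤ M.hRank := by
    have h1 := Matrix.rank_of_det_ne_zero hdet
    have h2 := Matrix.rank_submatrix_le M.hMatrix (Subtype.val : S → V) (Subtype.val : S → V)
    have h3 : M.hMatrix.submatrix (Subtype.val : S → V) (Subtype.val : S → V)
        = (M.induce S).hMatrix := rfl
    rw [h3, h1, Fintype.card_eq_nat_card, Nat.card_coe_set_eq] at h2
    exact h2
  omega

/-! ### Additivity over connected components -/

theorem mk_eq_of_adj {G : SimpleGraph V} {u v : V} (h : G.Adj u v) :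
    G.connectedComponentMk u = G.connectedComponentMk v :=
  SimpleGraph.ConnectedComponent.sound h.reachable

theorem ncard_sum [Fintype V] (G : SimpleGraph V) (p : V → Prop) :
    {v | p v}.ncard = ∑ c : G.ConnectedComponent, {x : c.supp | p x.1}.ncard := by
  rw [Set.ncard_eq_toFinset_card', Finset.card_eq_sum_card_fiberwise
    (f := G.connectedComponentMk) (t := Finset.univ) (fun _ _ => Finset.mem_coe.mpr (Finset.mem_univ _))]
  refine Finset.sum_congr rfl fun c _ => ?_
  rw [← Set.ncard_coe_finset, ← Set.ncard_image_of_injective _ Subtype.val_injective]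
  congr 1
  ext v
  simp [SimpleGraph.ConnectedComponent.mem_supp_iff]

theorem matching_add [Fintype V] (M : MixedGraph V) :
    matchingNumber M.graph = ∑ c, matchingNumber (M.comp c).graph := by
  have key : 2 * matchingNumber M.graph = ∑ c, 2 * matchingNumber (M.comp c).graph := by
    apply le_antisymm
    · obtain ⟨f, hf, hcard⟩ := exists_MI M.graph
      rw [← hcard, ncard_sum M.graph]
      refine Finset.sum_le_sum fun c _ => ?_
      have hc : ∀ v ∈ c.supp, f v ∈ c.supp := by
        intro v hv
        by_cases h : f v = v
        · rwa [h]
        · rw [SimpleGraph.ConnectedComponent.mem_supp_iff] at hv ⊢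
          rw [← hv]
          exact (mk_eq_of_adj (hf.2 v h)).symm
      have hm : MI (M.comp c).graph (fun v => ⟨f v.1, hc v.1 v.2⟩) := by
        refine ⟨fun v => Subtype.ext (hf.1 v.1), fun v hv => ?_⟩
        exact hf.2 v.1 (fun h => hv (Subtype.ext h))
      refine le_trans (le_of_eq ?_) hm.le
      congr 1
      ext v
      simp [Subtype.ext_iff]
    · choose g hg hcard using fun c => exists_MI (M.comp c).graph
      let f : V → V := fun v => (g (M.graph.connectedComponentMk v) ⟨v, rfl⟩).1
      have hfc : ∀ c (x : c.supp), f x.1 = (g c x).1 := by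
        rintro c ⟨x, rfl⟩
        rfl
      have hm : MI M.graph f := by
        refine ⟨fun v => ?_, fun v hv => ?_⟩
        · change f (g (M.graph.connectedComponentMk v) ⟨v, rfl⟩).1 = v
          rw [hfc, (hg _).1]
        · exact (hg _).2 ⟨v, rfl⟩ (fun h => hv (congrArg Subtype.val h))
      refine le_trans (le_of_eq ?_) hm.le
      rw [ncard_sum M.graph]
      refine Finset.sum_congr rfl fun c _ => ?_
      rw [← hcard]
      congr 1
      ext v
      simp [hfc, Subtype.ext_iff]
  rw [← Finset.mul_sum] at key
  omega

theorem evenCycle_add [Fintype V] (M : MixedGraph V) :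
    evenCycleCount M.graph = ∑ c, evenCycleCount (M.comp c).graph := by
  let φ : ∀ c, (M.comp c).graph.Copy M.graph := fun c =>
    (SimpleGraph.Embedding.induce c.supp).toCopy
  have hφ : ∀ c (x : c.supp), (φ c).toHom x = x.1 := fun _ _ => rfl
  let F : (Σ c, {C : (M.comp c).graph.Subgraph // EvCyc C}) →
      {C : M.graph.Subgraph // EvCyc C} :=
    fun p => ⟨p.2.1.map (φ p.1).toHom, (evCyc_map (φ p.1) p.2.1).mpr p.2.2⟩
  have hF : Function.Bijective F := by
    constructor
    · rintro ⟨c, C, hC⟩ ⟨d, D, hD⟩ h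
      have h' : C.map (φ c).toHom = D.map (φ d).toHom := congrArg Subtype.val h
      have hcd : c = d := by
        obtain ⟨x, hx⟩ := hC.1.1.nonempty
        have hx' : x.1 ∈ (D.map (φ d).toHom).verts := by
          rw [← h']; exact ⟨x, hx, rfl⟩
        obtain ⟨y, hy, hy'⟩ := hx'
        have hy2 : y.1 = x.1 := hy'
        have h1 := x.2
        have h2 := y.2
        rw [SimpleGraph.ConnectedComponent.mem_supp_iff] at h1 h2
        rw [← h1, ← h2, hy2]
      subst hcd
      have hCD : C = D := by
        have hinj : Function.Injective (φ c).toHom := (φ c).injective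
        have hvm : ∀ (E : (M.comp c).graph.Subgraph) a,
            (φ c).toHom a ∈ (E.map (φ c).toHom).verts ↔ a ∈ E.verts := by
          intro E a
          rw [SimpleGraph.Subgraph.map_verts, hinj.mem_set_image]
        have ham : ∀ (E : (M.comp c).graph.Subgraph) a b,
            (E.map (φ c).toHom).Adj ((φ c).toHom a) ((φ c).toHom b) ↔ E.Adj a b := by
          intro E a b
          constructor
          · rintro ⟨x, y, hxy, hx, hy⟩
            rwa [hinj hx, hinj hy] at hxy
          · intro h
            exact ⟨a, b, h, rfl, rfl⟩
        ext a b
        · rw [← hvm C, ← hvm D, h']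
        · rw [← ham C, ← ham D, h']
      subst hCD
      rfl
    · rintro ⟨C, hC⟩
      obtain ⟨v, hv⟩ := hC.1.1.nonempty
      let c := M.graph.connectedComponentMk v
      have hsub : ∀ w ∈ C.verts, w ∈ c.supp := by
        intro w hw
        exact SimpleGraph.ConnectedComponent.sound
          ((hC.1.1.coe.preconnected ⟨w, hw⟩ ⟨v, hv⟩).map C.hom)
      have hmap : (C.comap (φ c).toHom).map (φ c).toHom = C := by
        ext a b
        · constructor
          · rintro ⟨x, hx, rfl⟩
            exact hx
          · intro ha
            exact ⟨⟨a, hsub a ha⟩, ha, rfl⟩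
        · constructor
          · rintro ⟨x, y, hxy, rfl, rfl⟩
            exact hxy.2
          · intro hab
            refine ⟨⟨a, hsub a (C.edge_vert hab)⟩, ⟨b, hsub b (C.edge_vert hab.symm)⟩, ?_, rfl, rfl⟩
            exact ⟨C.adj_sub hab, hab⟩
      have hev : EvCyc (C.comap (φ c).toHom) := by
        rw [← evCyc_map (φ c), hmap]
        exact hC
      exact ⟨⟨c, ⟨_, hev⟩⟩, Subtype.ext hmap⟩
  have h1 := Nat.card_congr (Equiv.ofBijective F hF)
  rw [Nat.card_sigma] at h1
  exact h1.symm

theorem hRank_add [Fintype V] [DecidableEq V] (M : MixedGraph V) :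
    M.hRank = ∑ c, (M.comp c).hRank := by
  have hmul : ∀ (y : V → ℂ) c (v : c.supp),
      M.hMatrix.mulVec y v.1 = (M.comp c).hMatrix.mulVec (fun w => y w.1) v := by
    intro y c v
    simp only [Matrix.mulVec, dotProduct]
    have h1 : ∀ w ∈ (Finset.univ : Finset V), w ∉ c.supp.toFinset → M.hMatrix v.1 w * y w = 0 := by
      intro w _ hw
      have hna : ¬ M.graph.Adj v.1 w := by
        intro h
        apply hw
        rw [Set.mem_toFinset, SimpleGraph.ConnectedComponent.mem_supp_iff]
        rw [← mk_eq_of_adj h]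
        exact v.2
      have h2 : M.hMatrix v.1 w = 0 := by
        unfold MixedGraph.hMatrix
        rw [if_neg (fun h => hna (M.arc_adj _ _ h)), if_neg (fun h => hna (M.arc_adj _ _ h).symm),
          if_neg hna]
      rw [h2, zero_mul]
    rw [← Finset.sum_subset (Finset.subset_univ c.supp.toFinset) (fun w hw h => h1 w hw h)]
    rw [Finset.sum_subtype (p := fun w => w ∈ c.supp) _ (fun w => Set.mem_toFinset)]
    rfl
  let Φ : (∀ c, LinearMap.range (M.comp c).hMatrix.mulVecLin) →ₗ[ℂ] (V → ℂ) :=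
    { toFun := fun y v => (y (M.graph.connectedComponentMk v)).1 ⟨v, rfl⟩
      map_add' := fun _ _ => rfl
      map_smul' := fun _ _ => rfl }
  have hΦ : ∀ y c (x : c.supp), Φ y x.1 = (y c).1 x := by
    rintro y c ⟨x, rfl⟩
    rfl
  have hinj : Function.Injective Φ := by
    intro y z h
    funext c
    apply Subtype.ext
    funext x
    rw [← hΦ, ← hΦ, h]
  have hrange : LinearMap.range Φ = LinearMap.range M.hMatrix.mulVecLin := by
    apply le_antisymm
    · rintro _ ⟨y, rfl⟩
      choose z hz using fun c => (y c).2
      refine ⟨fun v => z (M.graph.connectedComponentMk v) ⟨v, rfl⟩, ?_⟩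
      have hz' : ∀ c, (fun w : c.supp => z (M.graph.connectedComponentMk w.1) ⟨w.1, rfl⟩) = z c := by
        intro c
        funext w
        obtain ⟨w, rfl⟩ := w
        rfl
      funext v
      rw [Matrix.mulVecLin_apply]
      have h1 := hmul (fun v => z (M.graph.connectedComponentMk v) ⟨v, rfl⟩)
        (M.graph.connectedComponentMk v) ⟨v, rfl⟩
      rw [hz'] at h1
      refine h1.trans ?_
      exact congrFun (hz (M.graph.connectedComponentMk v)) ⟨v, rfl⟩
    · rintro _ ⟨y, rfl⟩
      refine ⟨fun c => ⟨_, ⟨fun w => y w.1, rfl⟩⟩, ?_⟩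
      funext v
      exact (hmul y (M.graph.connectedComponentMk v) ⟨v, rfl⟩).symm
  have h1 := LinearMap.finrank_range_of_inj hinj
  rw [hrange, Module.finrank_pi_fintype] at h1
  exact h1

/-- r(G̃) = 2m(G) − 2κ(G) + 1 iff exactly one connected component
G̃₀ satisfies r(G̃₀) = 2m(G₀) − 2κ(G₀) + 1 while every other component G̃ᵢ satisfies
r(G̃ᵢ) = 2m(Gᵢ) − 2κ(Gᵢ). -/
theorem hRank_eq_lower_bound_add_one_iff_components
    {V : Type u} [Fintype V] [DecidableEq V] (M : MixedGraph V) :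
    (M.hRank : ℤ) =
        2 * (matchingNumber M.graph : ℤ) - 2 * (evenCycleCount M.graph : ℤ) + 1 ↔
      ∃ c₀ : M.graph.ConnectedComponent,
        ((M.comp c₀).hRank : ℤ) =
          2 * (matchingNumber (M.comp c₀).graph : ℤ) -
            2 * (evenCycleCount (M.comp c₀).graph : ℤ) + 1 ∧
        ∀ c : M.graph.ConnectedComponent, c ≠ c₀ →
          ((M.comp c).hRank : ℤ) =
            2 * (matchingNumber (M.comp c).graph : ℤ) -
              2 * (evenCycleCount (M.comp c).graph : ℤ) := by
  have hr := hRank_add M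
  have hm := matching_add M
  have hk := evenCycle_add M
  let d : M.graph.ConnectedComponent → ℤ := fun c => ((M.comp c).hRank : ℤ) -
    (2 * (matchingNumber (M.comp c).graph : ℤ) - 2 * (evenCycleCount (M.comp c).graph : ℤ))
  have hd : ∀ c, 0 ≤ d c := by
    intro c
    have := lower_bound (M.comp c)
    simp only [d]
    have h2 : ((M.comp c).hRank : ℤ) = _ := rfl
    zify at this
    linarith
  have hsum : ∑ c, d c = (M.hRank : ℤ) -
      (2 * (matchingNumber M.graph : ℤ) - 2 * (evenCycleCount M.graph : ℤ)) := by
    rw [hr, hm, hk]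
    push_cast
    simp only [d, Finset.sum_sub_distrib, Finset.mul_sum]
    congr!
  have hmain : ∑ c, d c = 1 ↔ ∃ c₀, d c₀ = 1 ∧ ∀ c, c ≠ c₀ → d c = 0 := by
    constructor
    · intro h
      obtain ⟨c₀, -, hc₀⟩ := Finset.exists_ne_zero_of_sum_ne_zero (by rw [h]; exact one_ne_zero)
      have h1 := Finset.add_sum_erase Finset.univ d (Finset.mem_univ c₀)
      have h2 : 0 ≤ ∑ c ∈ Finset.univ.erase c₀, d c := Finset.sum_nonneg fun c _ => hd c
      have h3 := hd c₀
      have h4 : ∑ c ∈ Finset.univ.erase c₀, d c = 0 := by omega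
      refine ⟨c₀, by omega, fun c hc => ?_⟩
      exact (Finset.sum_eq_zero_iff_of_nonneg (fun c _ => hd c)).mp h4 c
        (Finset.mem_erase.mpr ⟨hc, Finset.mem_univ c⟩)
    · rintro ⟨c₀, h1, h2⟩
      rw [← Finset.add_sum_erase Finset.univ d (Finset.mem_univ c₀), h1,
        Finset.sum_eq_zero (fun c hc => h2 c (Finset.mem_erase.mp hc).1), add_zero]
  have e1 : ∀ a b : ℤ, a = b + 1 ↔ a - b = 1 := fun a b => by omega
  have e0 : ∀ a b : ℤ, a = b ↔ a - b = 0 := fun a b => by omega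
  rw [e1, ← hsum, hmain]
  refine exists_congr fun c₀ => and_congr ?_ (forall_congr' fun c => forall_congr' fun _ => ?_)
  · rw [e1]
  · rw [e0 (((M.comp c).hRank : ℤ))]

end MixedPaper
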